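/- arXiv:1509.05745 — 2 statements merged into one kernel-verified Lean document; each statement's English description precedes it below -/
import Mathlib

section
/- The minimal period of the Narayana sequence modulo 11 is 60, which equals (p² − 1)/2 for p = 11; in particular the minimal period is a proper divisor of p² − 1. -/
/-!
The recurrence has order three, so the sequence modulo 11 is determined by any three consecutive
residues. Hence `k` is a period modulo 11 as soon as `(u_k, u_{k+1}, u_{k+2}) ≡ (0, 1, 1)`
(`narayana_add_modEq`), and this condition is clearly necessary. It holds for `k = 60` and, by a
finite computation, for no `0 < k < 60` (`not_initial_state_of_lt`).
-/

/-- The Narayana sequence: u₀ = 0, u₁ = 1, u₂ = 1, u_{n+3} = u_{n+2} + u_n. -/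
def narayana : ℕ → ℕ
  | 0 => 0
  | 1 => 1
  | 2 => 1
  | n + 3 => narayana (n + 2) + narayana n

/-- Agreement of the initial triple with its shift by `k` propagates along the recurrence, so `k` is
a period modulo `m`. -/
theorem narayana_add_modEq {m k : ℕ} (h0 : narayana k ≡ narayana 0 [MOD m])
    (h1 : narayana (k + 1) ≡ narayana 1 [MOD m]) (h2 : narayana (k + 2) ≡ narayana 2 [MOD m]) :
    ∀ n, narayana (n + k) ≡ narayana n [MOD m]
  | 0 => by simpa using h0
  | 1 => by simpa [add_comm] using h1
  | 2 => by simpa [add_comm] using h2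
  | n + 3 => by
    have e : narayana (n + 3 + k) = narayana (n + 2 + k) + narayana (n + k) := by
      rw [show n + 3 + k = n + k + 3 by ring, show n + 2 + k = n + k + 2 by ring, narayana]
    rw [e, narayana]
    exact (narayana_add_modEq h0 h1 h2 (n + 2)).add (narayana_add_modEq h0 h1 h2 n)

theorem not_initial_state_of_lt : ∀ k < 60, 0 < k →
    ¬ (narayana k % 11 = 0 ∧ narayana (k + 1) % 11 = 1 ∧ narayana (k + 2) % 11 = 1) := by
  decide +kernel

/-- The minimal period of the Narayana sequence modulo 11 is 60. -/
theorem narayana_period_mod_11 :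
    IsLeast {k | 0 < k ∧ ∀ n, narayana (n + k) ≡ narayana n [MOD 11]} 60 ∧
    (60 : ℕ) = (11 ^ 2 - 1) / 2 ∧ (60 : ℕ) ∣ 11 ^ 2 - 1 ∧ (60 : ℕ) ≠ 11 ^ 2 - 1 := by
  refine ⟨⟨⟨by norm_num, ?_⟩, ?_⟩, by norm_num, by norm_num, by norm_num⟩
  · exact narayana_add_modEq (by decide +kernel) (by decide +kernel) (by decide +kernel)
  · rintro k ⟨hk, h⟩
    by_contra! hlt
    refine not_initial_state_of_lt k hlt hk ⟨?_, ?_, ?_⟩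
    · simpa [Nat.ModEq, narayana] using h 0
    · simpa [Nat.ModEq, narayana, add_comm] using h 1
    · simpa [Nat.ModEq, narayana, add_comm] using h 2
end

section
/- The minimal period of the Narayana sequence modulo 13 is 168, which equals p² − 1 for p = 13. -/
/-- The shift of a window of three consecutive terms modulo 13. Residues are represented by
natural numbers below 13, so that iterates can be evaluated by kernel arithmetic. -/
def narayanaStep (s : ℕ × ℕ × ℕ) : ℕ × ℕ × ℕ :=
  (s.2.1, s.2.2, (s.2.2 + s.1) % 13)

lemma narayanaStep_iterate (n : ℕ) :
    narayanaStep^[n] (0, 1, 1) =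
      (narayana n % 13, narayana (n + 1) % 13, narayana (n + 2) % 13) := by
  induction n with
  | zero => rfl
  | succ n ih =>
    rw [Function.iterate_succ_apply', ih]
    have h : narayana (n + 1 + 2) = narayana (n + 2) + narayana n := rfl
    simp [narayanaStep, h, Nat.add_mod]

lemma narayana_period_iff (k : ℕ) :
    (∀ n, narayana (n + k) ≡ narayana n [MOD 13]) ↔
      narayanaStep^[k] (0, 1, 1) = (0, 1, 1) := by
  constructor
  · intro h
    rw [narayanaStep_iterate, Nat.add_comm k 1, Nat.add_comm k 2]
    have h0 : narayana k % 13 = 0 := by simpa [Nat.ModEq, narayana] using h 0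
    have h1 : narayana (1 + k) % 13 = 1 := h 1
    have h2 : narayana (2 + k) % 13 = 1 := h 2
    rw [h0, h1, h2]
  · intro h n
    have hn := narayanaStep_iterate (n + k)
    rw [Function.iterate_add_apply, h, narayanaStep_iterate] at hn
    exact (congrArg Prod.fst hn).symm

/-- The minimal period of the Narayana sequence modulo 13 is 168. -/
theorem narayana_period_mod_13 :
    IsLeast {k | 0 < k ∧ ∀ n, narayana (n + k) ≡ narayana n [MOD 13]} 168 ∧
    (168 : ℕ) = 13 ^ 2 - 1 := by
  refine ⟨⟨⟨by norm_num, (narayana_period_iff 168).2 (by decide +kernel)⟩, ?_⟩, by norm_num⟩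
  rintro k ⟨hk, h⟩
  rw [narayana_period_iff] at h
  have no_return : ∀ j < 168, 0 < j → narayanaStep^[j] (0, 1, 1) ≠ (0, 1, 1) := by
    decide +kernel
  by_contra! hlt
  exact no_return k hlt hk h
end
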